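/- arXiv:2210.04079 — 3 statements merged into one kernel-verified Lean document; each statement's English description precedes it below -/
import Mathlib

section
/- Suppose Φ, Γ and Λ are finite and positive definite, and b''(Xᵀβ₀)·‖LΦ⁻¹X‖ > 0 almost surely. Then Γ⁻¹ ≤ Φ⁻¹ Λ Φ⁻¹ and Γ⁻¹ Ω Γ⁻¹ ≥ Φ⁻¹, where the inequalities are in the Loewner ordering. -/
open MeasureTheory ProbabilityTheory Filter Matrix

noncomputable section

/-- Euclidean norm of a vector in `ℝ^p`. -/
def euclNorm {p : ℕ} (v : Fin p → ℝ) : ℝ := Real.sqrt (∑ i, v i ^ 2)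

/-!
If nonnegative weights satisfy `c ^ 2 ≤ a * d` pointwise and `P` is a random positive semidefinite
matrix, then the block matrix `[a P, c P; c P, d P]` is positive semidefinite, hence so is its
expectation `[A, C; C, D]`. Its Schur complement gives `C A⁻¹ C ≤ D`, that is, `A⁻¹ ≤ C⁻¹ D C⁻¹`.
Both inequalities are instances with `P = X Xᵀ` and `c ^ 2 = a * d`: with `w = b''(Xᵀβ₀)` and
`h = ‖LΦ⁻¹X‖`, take `(a, c, d) = (w ^ (3/2) h, w, w ^ (1/2) / h)` for the first one and
`(a, c, d) = (w, w ^ (3/2) h, w ^ 2 h ^ 2)` for the second one.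
-/

open scoped ComplexOrder

theorem posSemidef_conj_inv_sub_inv {n R : Type*} [Fintype n] [DecidableEq n] [CommRing R]
    [PartialOrder R] [StarRing R] {A C D : Matrix n n R} (hC : IsUnit C)
    (h : (D - Cᴴ * A⁻¹ * C).PosSemidef) :
    (C⁻¹ᴴ * D * C⁻¹ - A⁻¹).PosSemidef := by
  have hdet : IsUnit C.det := (isUnit_iff_isUnit_det C).1 hC
  have hcancel : C⁻¹ᴴ * (Cᴴ * A⁻¹ * C) * C⁻¹ = A⁻¹ := by
    rw [← Matrix.mul_assoc, ← Matrix.mul_assoc, ← conjTranspose_mul, mul_nonsing_inv _ hdet,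
      conjTranspose_one, Matrix.one_mul, mul_nonsing_inv_cancel_right _ _ hdet]
  simpa only [Matrix.mul_sub, Matrix.sub_mul, hcancel] using h.conjTranspose_mul_mul_same C⁻¹

section Blocks

variable {n 𝕜 : Type*} [Finite n] [RCLike 𝕜] {P : Matrix n n 𝕜}

theorem posSemidef_fromBlocks_mul_smul (hP : P.PosSemidef) (f g : ℝ) :
    (fromBlocks ((f * f) • P) ((f * g) • P) ((f * g) • P) ((g * g) • P)).PosSemidef := by
  classical
  have := Fintype.ofFinite n
  have hfactor : fromBlocks ((f * f) • P) ((f * g) • P) ((f * g) • P) ((g * g) • P) =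
      (fromCols (f • (1 : Matrix n n 𝕜)) (g • (1 : Matrix n n 𝕜)))ᴴ * P *
        fromCols (f • (1 : Matrix n n 𝕜)) (g • (1 : Matrix n n 𝕜)) := by
    rw [conjTranspose_fromCols_eq_fromRows_conjTranspose, fromRows_mul, fromRows_mul_fromCols]
    simp [smul_smul, mul_comm g f]
  exact hfactor ▸ hP.conjTranspose_mul_mul_same _

theorem posSemidef_fromBlocks_smul (hP : P.PosSemidef) {a c d : ℝ} (ha : 0 ≤ a) (hd : 0 ≤ d)
    (hcad : c ^ 2 ≤ a * d) :
    (fromBlocks (a • P) (c • P) (c • P) (d • P)).PosSemidef := by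
  obtain rfl | ha := ha.eq_or_lt
  · obtain rfl : c = 0 := by nlinarith
    simpa [Real.mul_self_sqrt hd] using posSemidef_fromBlocks_mul_smul hP 0 √d
  have hschur : 0 ≤ d - c ^ 2 / a := sub_nonneg.2 ((div_le_iff₀' ha).2 hcad)
  have hc : √a * (c / √a) = c := mul_div_cancel₀ _ (Real.sqrt_pos.2 ha).ne'
  have hca : c / √a * (c / √a) = c ^ 2 / a := by
    rw [div_mul_div_comm, Real.mul_self_sqrt ha.le, sq]
  convert (posSemidef_fromBlocks_mul_smul hP √a (c / √a)).add
    (posSemidef_fromBlocks_mul_smul hP 0 √(d - c ^ 2 / a)) using 1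
  simp [fromBlocks_add, Real.mul_self_sqrt, ha.le, hschur, hc, hca, ← add_smul]

end Blocks

section EntrywiseIntegral

variable {Ω m n 𝕜 : Type*} [MeasurableSpace Ω] [RCLike 𝕜]

/-- `HasEntrywiseIntegral μ F M`: the integral of the matrix-valued function `F` exists and is `M`.
It is taken entrywise because matrices carry no global norm; integrability is included. -/
def HasEntrywiseIntegral (μ : Measure Ω) (F : Ω → Matrix m n 𝕜) (M : Matrix m n 𝕜) : Prop :=
  (∀ i j, Integrable (fun ω => F ω i j) μ) ∧ M = Matrix.of fun i j => ∫ ω, F ω i j ∂μ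

namespace HasEntrywiseIntegral

variable {μ : Measure Ω}

theorem integral_eq {F : Ω → Matrix m n 𝕜} {M : Matrix m n 𝕜} (hF : HasEntrywiseIntegral μ F M)
    (i : m) (j : n) : ∫ ω, F ω i j ∂μ = M i j := by
  rw [hF.2, of_apply]

theorem fromBlocks {l o : Type*} {A : Ω → Matrix m l 𝕜} {B : Ω → Matrix m o 𝕜}
    {C : Ω → Matrix n l 𝕜} {D : Ω → Matrix n o 𝕜} {A' : Matrix m l 𝕜} {B' : Matrix m o 𝕜}
    {C' : Matrix n l 𝕜} {D' : Matrix n o 𝕜} (hA : HasEntrywiseIntegral μ A A')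
    (hB : HasEntrywiseIntegral μ B B') (hC : HasEntrywiseIntegral μ C C')
    (hD : HasEntrywiseIntegral μ D D') :
    HasEntrywiseIntegral μ (fun ω => Matrix.fromBlocks (A ω) (B ω) (C ω) (D ω))
      (Matrix.fromBlocks A' B' C' D') := by
  constructor
  · rintro (i | i) (j | j)
    exacts [hA.1 i j, hB.1 i j, hC.1 i j, hD.1 i j]
  · ext (i | i) (j | j)
    exacts [(hA.integral_eq i j).symm, (hB.integral_eq i j).symm, (hC.integral_eq i j).symm,
      (hD.integral_eq i j).symm]

variable {F : Ω → Matrix n n 𝕜} {M : Matrix n n 𝕜}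

theorem isHermitian (hF : HasEntrywiseIntegral μ F M) (hherm : ∀ᵐ ω ∂μ, (F ω).IsHermitian) :
    M.IsHermitian := by
  refine IsHermitian.ext fun i j => ?_
  rw [← hF.integral_eq, ← hF.integral_eq, RCLike.star_def, ← integral_conj]
  exact integral_congr_ae (hherm.mono fun ω h => h.apply i j)

theorem dotProduct_mulVec [Fintype n] (hF : HasEntrywiseIntegral μ F M) (u v : n → 𝕜) :
    u ⬝ᵥ M *ᵥ v = ∫ ω, u ⬝ᵥ F ω *ᵥ v ∂μ := by
  have hint (i j : n) : Integrable (fun ω => u i * (F ω i j * v j)) μ :=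
    ((hF.1 i j).mul_const _).const_mul _
  simp only [dotProduct, mulVec, Finset.mul_sum]
  rw [integral_finsetSum _ fun i _ => integrable_finsetSum _ fun j _ => hint i j]
  refine Finset.sum_congr rfl fun i _ => ?_
  rw [integral_finsetSum _ fun j _ => hint i j]
  simp only [integral_const_mul, integral_mul_const, hF.integral_eq]

theorem posSemidef [Finite n] (hF : HasEntrywiseIntegral μ F M)
    (hpos : ∀ᵐ ω ∂μ, (F ω).PosSemidef) : M.PosSemidef := by
  have := Fintype.ofFinite n
  refine .of_dotProduct_mulVec_nonneg (hF.isHermitian (hpos.mono fun ω h => h.isHermitian))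
    fun v => ?_
  rw [hF.dotProduct_mulVec]
  exact integral_nonneg_of_ae (hpos.mono fun ω h => h.dotProduct_mulVec_nonneg v)

theorem posSemidef_sub_conjTranspose_mul_inv_mul [Fintype m] [DecidableEq m] [Finite n]
    {A : Ω → Matrix m m 𝕜} {B : Ω → Matrix m n 𝕜} {C : Ω → Matrix n m 𝕜} {D : Ω → Matrix n n 𝕜}
    {A' : Matrix m m 𝕜} {B' : Matrix m n 𝕜} {D' : Matrix n n 𝕜}
    (hA : HasEntrywiseIntegral μ A A') (hB : HasEntrywiseIntegral μ B B')
    (hC : HasEntrywiseIntegral μ C B'ᴴ) (hD : HasEntrywiseIntegral μ D D') (hA' : A'.PosDef)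
    (hpos : ∀ᵐ ω ∂μ, (Matrix.fromBlocks (A ω) (B ω) (C ω) (D ω)).PosSemidef) :
    (D' - B'ᴴ * A'⁻¹ * B').PosSemidef := by
  have := Fintype.ofFinite n
  have := hA'.isUnit.invertible
  exact (hA'.fromBlocks₁₁ B' D').1 ((hA.fromBlocks hB hC hD).posSemidef hpos)

end HasEntrywiseIntegral

end EntrywiseIntegral

section Weights

variable {Ω n 𝕜 : Type*} [MeasurableSpace Ω] [RCLike 𝕜] [Fintype n] [DecidableEq n]
  {μ : Measure Ω} {P : Ω → Matrix n n 𝕜}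

theorem posSemidef_inv_mul_mul_inv_sub_inv (hP : ∀ᵐ ω ∂μ, (P ω).PosSemidef) {a c d : Ω → ℝ}
    {A C D : Matrix n n 𝕜} (hA : HasEntrywiseIntegral μ (fun ω => a ω • P ω) A)
    (hC : HasEntrywiseIntegral μ (fun ω => c ω • P ω) C)
    (hD : HasEntrywiseIntegral μ (fun ω => d ω • P ω) D) (hApd : A.PosDef) (hCunit : IsUnit C)
    (hweights : ∀ᵐ ω ∂μ, 0 ≤ a ω ∧ 0 ≤ d ω ∧ c ω ^ 2 ≤ a ω * d ω) :
    (C⁻¹ * D * C⁻¹ - A⁻¹).PosSemidef := by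
  have hCherm : C.IsHermitian :=
    hC.isHermitian (hP.mono fun ω h => h.isHermitian.smul (star_trivial (c ω)))
  have hblock : ∀ᵐ ω ∂μ,
      (fromBlocks (a ω • P ω) (c ω • P ω) (c ω • P ω) (d ω • P ω)).PosSemidef := by
    filter_upwards [hP, hweights] with ω h ⟨ha, hd, hcad⟩
    exact posSemidef_fromBlocks_smul h ha hd hcad
  have hschur := hA.posSemidef_sub_conjTranspose_mul_inv_mul hC (hCherm.eq.symm ▸ hC) hD hApd hblock
  simpa only [hCherm.inv.eq] using posSemidef_conj_inv_sub_inv hCunit hschur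

theorem rpow_three_halves {x : ℝ} (hx : 0 ≤ x) : x ^ (3 / 2 : ℝ) = x * √x := by
  rw [show (3 / 2 : ℝ) = 1 + 1 / 2 by norm_num, Real.rpow_one_add' hx (by norm_num),
    Real.sqrt_eq_rpow]

theorem unweighted_estimator_efficiency_general (hP : ∀ᵐ ω ∂μ, (P ω).PosSemidef) {w h : Ω → ℝ}
    (hw : ∀ᵐ ω ∂μ, 0 < w ω) (hh : ∀ᵐ ω ∂μ, 0 < h ω) {Φ Γ Λ Ξ : Matrix n n 𝕜}
    (hΦ : HasEntrywiseIntegral μ (fun ω => w ω • P ω) Φ)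
    (hΓ : HasEntrywiseIntegral μ (fun ω => (w ω ^ (3 / 2 : ℝ) * h ω) • P ω) Γ)
    (hΛ : HasEntrywiseIntegral μ (fun ω => (w ω / (√(w ω) * h ω)) • P ω) Λ)
    (hΞ : HasEntrywiseIntegral μ (fun ω => (w ω ^ 2 * h ω ^ 2) • P ω) Ξ)
    (hΦpd : Φ.PosDef) (hΓpd : Γ.PosDef) :
    (Φ⁻¹ * Λ * Φ⁻¹ - Γ⁻¹).PosSemidef ∧ (Γ⁻¹ * Ξ * Γ⁻¹ - Φ⁻¹).PosSemidef := by
  constructor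
  · refine posSemidef_inv_mul_mul_inv_sub_inv hP hΓ hΦ hΛ hΓpd hΦpd.isUnit ?_
    filter_upwards [hw, hh] with ω hwω hhω
    refine ⟨by positivity, by positivity, le_of_eq ?_⟩
    rw [rpow_three_halves hwω.le]
    field_simp
  · refine posSemidef_inv_mul_mul_inv_sub_inv hP hΦ hΓ hΞ hΦpd hΓpd.isUnit ?_
    filter_upwards [hw, hh] with ω hwω hhω
    refine ⟨hwω.le, by positivity, le_of_eq ?_⟩
    rw [rpow_three_halves hwω.le, mul_pow, mul_pow, Real.sq_sqrt hwω.le]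
    ring

end Weights

/-- Theorem 2, efficiency comparison.  `Ξ` plays the role of the
matrix `Ω` of the paper (the letter `Ω` is used for the sample space).
The conclusion `Γ⁻¹ ≤ Φ⁻¹ Λ Φ⁻¹` and `Γ⁻¹ Ξ Γ⁻¹ ≥ Φ⁻¹` is stated in the
Loewner ordering: `A ≤ B` iff `B - A` is positive semidefinite. -/
theorem unweighted_estimator_efficiency
    {Ω : Type*} [MeasurableSpace Ω] (μ : Measure Ω) [IsProbabilityMeasure μ]
    {p : ℕ} (X : Ω → Fin p → ℝ) (hX : Measurable X)
    (β₀ : Fin p → ℝ) (b'' : ℝ → ℝ)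
    (hb_cont : Continuous b'') (hb_bdd : ∃ M, ∀ t, |b'' t| ≤ M)
    (hb_nonneg : ∀ t, 0 ≤ b'' t)
    (L Φ Γ Λ Ξ : Matrix (Fin p) (Fin p) ℝ)
    -- Φ := E[b''(Xᵀβ₀) X Xᵀ], entrywise Bochner integrable
    (hΦint : ∀ i j, Integrable (fun ω => b'' (X ω ⬝ᵥ β₀) * (X ω i * X ω j)) μ)
    (hΦ : Φ = Matrix.of fun i j => ∫ ω, b'' (X ω ⬝ᵥ β₀) * (X ω i * X ω j) ∂μ)
    -- Γ := E[(b''(Xᵀβ₀))^{3/2} ‖LΦ⁻¹X‖ X Xᵀ]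
    (hΓint : ∀ i j, Integrable (fun ω =>
      b'' (X ω ⬝ᵥ β₀) ^ ((3 : ℝ) / 2) * euclNorm ((L * Φ⁻¹).mulVec (X ω))
        * (X ω i * X ω j)) μ)
    (hΓ : Γ = Matrix.of fun i j => ∫ ω,
      b'' (X ω ⬝ᵥ β₀) ^ ((3 : ℝ) / 2) * euclNorm ((L * Φ⁻¹).mulVec (X ω))
        * (X ω i * X ω j) ∂μ)
    -- Λ := E[b''(Xᵀβ₀) X Xᵀ / ((b''(Xᵀβ₀))^{1/2} ‖LΦ⁻¹X‖)]
    (hΛint : ∀ i j, Integrable (fun ω =>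
      b'' (X ω ⬝ᵥ β₀) * (X ω i * X ω j) /
        (Real.sqrt (b'' (X ω ⬝ᵥ β₀)) * euclNorm ((L * Φ⁻¹).mulVec (X ω)))) μ)
    (hΛ : Λ = Matrix.of fun i j => ∫ ω,
      b'' (X ω ⬝ᵥ β₀) * (X ω i * X ω j) /
        (Real.sqrt (b'' (X ω ⬝ᵥ β₀)) * euclNorm ((L * Φ⁻¹).mulVec (X ω))) ∂μ)
    -- Ξ := E[(b''(Xᵀβ₀))² ‖LΦ⁻¹X‖² X Xᵀ]
    (hΞint : ∀ i j, Integrable (fun ω =>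
      b'' (X ω ⬝ᵥ β₀) ^ 2 * euclNorm ((L * Φ⁻¹).mulVec (X ω)) ^ 2
        * (X ω i * X ω j)) μ)
    (hΞ : Ξ = Matrix.of fun i j => ∫ ω,
      b'' (X ω ⬝ᵥ β₀) ^ 2 * euclNorm ((L * Φ⁻¹).mulVec (X ω)) ^ 2
        * (X ω i * X ω j) ∂μ)
    -- Φ, Γ and Λ are positive definite
    (hΦpd : Φ.PosDef) (hΓpd : Γ.PosDef) (hΛpd : Λ.PosDef)
    -- b''(Xᵀβ₀)·‖LΦ⁻¹X‖ > 0 almost surely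
    (hpos : ∀ᵐ ω ∂μ, 0 < b'' (X ω ⬝ᵥ β₀) * euclNorm ((L * Φ⁻¹).mulVec (X ω))) :
    (Φ⁻¹ * Λ * Φ⁻¹ - Γ⁻¹).PosSemidef ∧ (Γ⁻¹ * Ξ * Γ⁻¹ - Φ⁻¹).PosSemidef := by
  simp only [mul_div_right_comm] at hΛint hΛ
  exact unweighted_estimator_efficiency_general
    (.of_forall fun ω => posSemidef_vecMulVec_self_star (X ω))
    (hpos.mono fun ω h => pos_of_mul_pos_left h (Real.sqrt_nonneg _))
    (hpos.mono fun ω h => pos_of_mul_pos_right h (hb_nonneg _))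
    ⟨hΦint, hΦ⟩ ⟨hΓint, hΓ⟩ ⟨hΛint, hΛ⟩ ⟨hΞint, hΞ⟩ hΦpd hΓpd
end
end

section
/- Let v be a random vector in ℝ^p and h a random variable with h > 0 almost surely, such that the matrices E[v vᵀ], E[h v vᵀ] and E[h⁻¹ v vᵀ] exist (Bochner integrable) and E[v vᵀ] and E[h v vᵀ] are positive definite. Then E[h v vᵀ]⁻¹ ≤ E[v vᵀ]⁻¹ E[h⁻¹ v vᵀ] E[v vᵀ]⁻¹ in the Loewner ordering. -/
open MeasureTheory ProbabilityTheory Filter Matrix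

noncomputable section

/-! The block matrix `E[w wᴴ]` of the stacked vector `w = (x, y)` is positive semidefinite, and its
Schur complement is the matrix Cauchy–Schwarz inequality `E[x yᴴ] E[y yᴴ]⁻¹ E[y xᴴ] ≤ E[x xᴴ]`.
Taking `x = h^(-1/2) v` and `y = h^(1/2) v` gives `B A⁻¹ B ≤ C` for `A = E[h v vᴴ]`, `B = E[v vᴴ]`
and `C = E[h⁻¹ v vᴴ]`; it remains to conjugate by `B⁻¹`. -/

theorem posSemidef_inv_mul_mul_inv_sub_iff {R n : Type*} [CommRing R] [PartialOrder R]
    [StarRing R] [Fintype n] [DecidableEq n] {B C D : Matrix n n R} (hB : B.IsHermitian)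
    (hBunit : IsUnit B) :
    (B⁻¹ * C * B⁻¹ - D).PosSemidef ↔ (C - B * D * B).PosSemidef := by
  have hdet : IsUnit B.det := (isUnit_iff_isUnit_det B).1 hBunit
  have hconj : B * (B⁻¹ * C * B⁻¹ - D) * star B = C - B * D * B := by
    rw [star_eq_conjTranspose, hB.eq]
    simp only [mul_sub, sub_mul, mul_assoc, nonsing_inv_mul B hdet, mul_one,
      mul_nonsing_inv_cancel_left B _ hdet]
  rw [← hconj, hBunit.posSemidef_star_right_conjugate_iff]

section CrossMoment

open scoped ComplexOrder

variable {Ω 𝕜 m n : Type*} [MeasurableSpace Ω] [RCLike 𝕜]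

/-- The cross-moment matrix `E[x yᴴ]` of two random vectors, with the expectation taken entrywise
(a non-integrable entry is `0`). For `x = y` it is the second-moment matrix of `x`. -/
def crossMoment (μ : Measure Ω) (x : Ω → m → 𝕜) (y : Ω → n → 𝕜) : Matrix m n 𝕜 :=
  Matrix.of fun i j => ∫ ω, x ω i * star (y ω j) ∂μ

variable {μ : Measure Ω} {x : Ω → m → 𝕜} {y : Ω → n → 𝕜}

theorem conjTranspose_crossMoment : (crossMoment μ x y)ᴴ = crossMoment μ y x := by
  ext i j
  simp [crossMoment, ← integral_conj, mul_comm]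

theorem crossMoment_sumElim_self :
    crossMoment μ (fun ω => Sum.elim (x ω) (y ω)) (fun ω => Sum.elim (x ω) (y ω)) =
      fromBlocks (crossMoment μ x x) (crossMoment μ x y)
        (crossMoment μ y x) (crossMoment μ y y) := by
  ext (i | i) (j | j) <;> rfl

theorem dotProduct_crossMoment_mulVec [Fintype m] [Fintype n]
    (hxy : ∀ i j, Integrable (fun ω => x ω i * star (y ω j)) μ) (a : m → 𝕜) (b : n → 𝕜) :
    a ⬝ᵥ (crossMoment μ x y *ᵥ b) = ∫ ω, (a ⬝ᵥ x ω) * (star (y ω) ⬝ᵥ b) ∂μ := by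
  have hterm (i : m) (j : n) : Integrable (fun ω => a i * (x ω i * star (y ω j) * b j)) μ :=
    ((hxy i j).mul_const _).const_mul _
  calc a ⬝ᵥ (crossMoment μ x y *ᵥ b)
      = ∑ i, ∑ j, ∫ ω, a i * (x ω i * star (y ω j) * b j) ∂μ := by
        simp only [dotProduct, mulVec, crossMoment, of_apply, Finset.mul_sum, integral_const_mul,
          integral_mul_const]
    _ = ∫ ω, ∑ i, ∑ j, a i * (x ω i * star (y ω j) * b j) ∂μ := by
        rw [integral_finsetSum _ fun i _ => integrable_finsetSum _ fun j _ => hterm i j]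
        simp only [integral_finsetSum _ fun j _ => hterm _ j]
    _ = ∫ ω, (a ⬝ᵥ x ω) * (star (y ω) ⬝ᵥ b) ∂μ := by
        simp only [dotProduct, Finset.sum_mul_sum, Pi.star_apply, mul_assoc]

theorem posSemidef_crossMoment_self [Finite m]
    (hx : ∀ i j, Integrable (fun ω => x ω i * star (x ω j)) μ) :
    (crossMoment μ x x).PosSemidef := by
  cases nonempty_fintype m
  refine .of_dotProduct_mulVec_nonneg conjTranspose_crossMoment fun a => ?_
  rw [dotProduct_crossMoment_mulVec hx]
  refine integral_nonneg fun ω => ?_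
  rw [star_dotProduct (x ω) a]
  exact mul_star_self_nonneg _

theorem posSemidef_crossMoment_sub_mul_inv_mul [Finite m] [Fintype n] [DecidableEq n]
    (hx : ∀ i j, Integrable (fun ω => x ω i * star (x ω j)) μ)
    (hxy : ∀ i j, Integrable (fun ω => x ω i * star (y ω j)) μ)
    (hy : ∀ i j, Integrable (fun ω => y ω i * star (y ω j)) μ)
    (hpd : (crossMoment μ y y).PosDef) :
    (crossMoment μ x x -
      crossMoment μ x y * (crossMoment μ y y)⁻¹ * crossMoment μ y x).PosSemidef := by
  have hyx (i : n) (j : m) : Integrable (fun ω => y ω i * star (x ω j)) μ := by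
    simpa [Pi.star_def, mul_comm] using
      memLp_one_iff_integrable.1 (memLp_one_iff_integrable.2 (hxy j i)).star
  have hblock : (fromBlocks (crossMoment μ x x) (crossMoment μ x y)
      (crossMoment μ x y)ᴴ (crossMoment μ y y)).PosSemidef := by
    rw [conjTranspose_crossMoment, ← crossMoment_sumElim_self]
    refine posSemidef_crossMoment_self ?_
    rintro (i | i) (j | j)
    exacts [hx i j, hxy i j, hyx i j, hy i j]
  let := hpd.isUnit.invertible
  simpa only [conjTranspose_crossMoment] using (PosDef.fromBlocks₂₂ _ _ hpd).1 hblock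

section Weights

variable {a b c : Ω → ℝ}

theorem smul_mul_star_smul_ae_eq (habc : ∀ᵐ ω ∂μ, a ω * b ω = c ω) (i : m) (j : n) :
    (fun ω => (a ω • x ω) i * star ((b ω • y ω) j)) =ᵐ[μ]
      fun ω => (c ω • x ω) i * star (y ω j) := by
  filter_upwards [habc] with ω hω
  simp only [Pi.smul_apply, star_smul, star_trivial, smul_mul_assoc, mul_smul_comm, smul_smul,
    mul_comm (b ω), hω]

theorem crossMoment_smul_smul (habc : ∀ᵐ ω ∂μ, a ω * b ω = c ω) :
    crossMoment μ (fun ω => a ω • x ω) (fun ω => b ω • y ω) =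
      crossMoment μ (fun ω => c ω • x ω) y :=
  Matrix.ext fun i j => integral_congr_ae (smul_mul_star_smul_ae_eq habc i j)

theorem integrable_smul_mul_star_smul (habc : ∀ᵐ ω ∂μ, a ω * b ω = c ω) {i : m} {j : n}
    (hc : Integrable (fun ω => (c ω • x ω) i * star (y ω j)) μ) :
    Integrable (fun ω => (a ω • x ω) i * star ((b ω • y ω) j)) μ :=
  hc.congr (smul_mul_star_smul_ae_eq habc i j).symm

end Weights

variable {v : Ω → n → 𝕜} {h : Ω → ℝ}

theorem posSemidef_crossMoment_inv_smul_sub [Fintype n] [DecidableEq n]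
    (hpos : ∀ᵐ ω ∂μ, 0 < h ω)
    (hBint : ∀ i j, Integrable (fun ω => v ω i * star (v ω j)) μ)
    (hAint : ∀ i j, Integrable (fun ω => (h ω • v ω) i * star (v ω j)) μ)
    (hCint : ∀ i j, Integrable (fun ω => ((h ω)⁻¹ • v ω) i * star (v ω j)) μ)
    (hApd : (crossMoment μ (fun ω => h ω • v ω) v).PosDef) :
    (crossMoment μ (fun ω => (h ω)⁻¹ • v ω) v -
      crossMoment μ v v * (crossMoment μ (fun ω => h ω • v ω) v)⁻¹ *
        crossMoment μ v v).PosSemidef := by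
  have hxx : ∀ᵐ ω ∂μ, (√(h ω))⁻¹ * (√(h ω))⁻¹ = (h ω)⁻¹ := by
    filter_upwards [hpos] with ω hω
    rw [← mul_inv, Real.mul_self_sqrt hω.le]
  have hxy : ∀ᵐ ω ∂μ, (√(h ω))⁻¹ * √(h ω) = 1 := by
    filter_upwards [hpos] with ω hω using inv_mul_cancel₀ (Real.sqrt_ne_zero'.2 hω)
  have hyx : ∀ᵐ ω ∂μ, √(h ω) * (√(h ω))⁻¹ = 1 := by simpa only [mul_comm] using hxy
  have hyy : ∀ᵐ ω ∂μ, √(h ω) * √(h ω) = h ω := by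
    filter_upwards [hpos] with ω hω using Real.mul_self_sqrt hω.le
  simpa only [crossMoment_smul_smul hxx, crossMoment_smul_smul hxy, crossMoment_smul_smul hyx,
      crossMoment_smul_smul hyy, one_smul] using
    posSemidef_crossMoment_sub_mul_inv_mul (x := fun ω => (√(h ω))⁻¹ • v ω)
      (y := fun ω => √(h ω) • v ω)
      (fun i j => integrable_smul_mul_star_smul hxx (hCint i j))
      (fun i j => integrable_smul_mul_star_smul hxy (by simpa only [one_smul] using hBint i j))
      (fun i j => integrable_smul_mul_star_smul hyy (hAint i j))
      (by rwa [crossMoment_smul_smul hyy])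

theorem inv_exp_smul_le_exp_inv_smul_general [Fintype n] [DecidableEq n]
    (hpos : ∀ᵐ ω ∂μ, 0 < h ω)
    (hBint : ∀ i j, Integrable (fun ω => v ω i * star (v ω j)) μ)
    (hAint : ∀ i j, Integrable (fun ω => (h ω • v ω) i * star (v ω j)) μ)
    (hCint : ∀ i j, Integrable (fun ω => ((h ω)⁻¹ • v ω) i * star (v ω j)) μ)
    (hApd : (crossMoment μ (fun ω => h ω • v ω) v).PosDef)
    (hBunit : IsUnit (crossMoment μ v v)) :
    ((crossMoment μ v v)⁻¹ * crossMoment μ (fun ω => (h ω)⁻¹ • v ω) v * (crossMoment μ v v)⁻¹ -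
      (crossMoment μ (fun ω => h ω • v ω) v)⁻¹).PosSemidef := by
  rw [posSemidef_inv_mul_mul_inv_sub_iff conjTranspose_crossMoment hBunit]
  exact posSemidef_crossMoment_inv_smul_sub hpos hBint hAint hCint hApd

end CrossMoment

/-- if `h > 0` a.s. and `B := E[v vᵀ]`, `A := E[h v vᵀ]` are positive
definite while `C := E[h⁻¹ v vᵀ]` exists (expectations taken entrywise), then
`A⁻¹ ≤ B⁻¹ C B⁻¹` in the Loewner ordering, i.e. `B⁻¹ C B⁻¹ - A⁻¹` is PSD. -/
theorem inv_exp_smul_le_exp_inv_smul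
    {Ω : Type*} [MeasurableSpace Ω] (μ : Measure Ω) [IsProbabilityMeasure μ]
    {p : ℕ} (v : Ω → Fin p → ℝ) (h : Ω → ℝ)
    (hv : Measurable v) (hh : Measurable h)
    (hpos : ∀ᵐ ω ∂μ, 0 < h ω)
    (hBint : ∀ i j, Integrable (fun ω => v ω i * v ω j) μ)
    (hAint : ∀ i j, Integrable (fun ω => h ω * (v ω i * v ω j)) μ)
    (hCint : ∀ i j, Integrable (fun ω => (h ω)⁻¹ * (v ω i * v ω j)) μ)
    (A B C : Matrix (Fin p) (Fin p) ℝ)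
    (hA : A = Matrix.of fun i j => ∫ ω, h ω * (v ω i * v ω j) ∂μ)
    (hB : B = Matrix.of fun i j => ∫ ω, v ω i * v ω j ∂μ)
    (hC : C = Matrix.of fun i j => ∫ ω, (h ω)⁻¹ * (v ω i * v ω j) ∂μ)
    (hApd : A.PosDef) (hBpd : B.PosDef) :
    (B⁻¹ * C * B⁻¹ - A⁻¹).PosSemidef := by
  subst hA hB hC
  simpa [crossMoment, mul_assoc] using inv_exp_smul_le_exp_inv_smul_general (v := v) hpos
    (by simpa using hBint) (by simpa [mul_assoc] using hAint) (by simpa [mul_assoc] using hCint)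
    (by simpa [crossMoment, mul_assoc] using hApd) (by simpa [crossMoment] using hBpd.isUnit)
end
end

section
/- Let v be a random vector in ℝ^p and h a random variable with h > 0 almost surely, such that E[v vᵀ], E[h v vᵀ] and E[h⁻¹ v vᵀ] exist (Bochner integrable) and A := E[h v vᵀ] and B := E[v vᵀ] are positive definite. Define the random vector f := √h · A⁻¹ v − h^{−1/2} · B⁻¹ v. Then E[f fᵀ] exists and E[f fᵀ] = B⁻¹ E[h⁻¹ v vᵀ] B⁻¹ − A⁻¹. -/
open MeasureTheory ProbabilityTheory Filter Matrix

noncomputable section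

/-!
With `x := √h v` and `y := h^{-1/2} v` the three given matrices are the second moments
`A = E[x xᵀ]`, `B = E[x yᵀ]`, `C = E[y yᵀ]`, and `f = A⁻¹ x - B⁻¹ y`. In the expansion of `E[f fᵀ]`
the square of `A⁻¹ x` and both cross terms all equal `A⁻¹`, which leaves `B⁻¹ C B⁻¹ - A⁻¹`.
-/

/-- The random vectors `x` and `y` have cross moment `W = E[x yᵀ]`, the expectation being taken
entrywise. Integrability of the entries is part of the notion, as the Bochner integral of a
non-integrable function is `0`. -/
structure HasCrossMoment {Ω 𝕜 m n : Type*} [MeasurableSpace Ω] [RCLike 𝕜]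
    (x : Ω → m → 𝕜) (y : Ω → n → 𝕜) (W : Matrix m n 𝕜) (μ : Measure Ω) : Prop where
  integrable : ∀ i j, Integrable (fun ω => x ω i * y ω j) μ
  integral_eq : ∀ i j, ∫ ω, x ω i * y ω j ∂μ = W i j

namespace HasCrossMoment

variable {Ω 𝕜 l m n : Type*} [MeasurableSpace Ω] [RCLike 𝕜] {μ : Measure Ω}
  {x x' : Ω → m → 𝕜} {y y' : Ω → n → 𝕜} {W W' : Matrix m n 𝕜}

theorem unique (h : HasCrossMoment x y W μ) (h' : HasCrossMoment x y W' μ) : W = W' :=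
  Matrix.ext fun i j => (h.integral_eq i j).symm.trans (h'.integral_eq i j)

theorem transpose (h : HasCrossMoment x y W μ) : HasCrossMoment y x Wᵀ μ where
  integrable i j := by simpa only [mul_comm] using h.integrable j i
  integral_eq i j := by simpa only [mul_comm, transpose_apply] using h.integral_eq j i

theorem isSymm {S : Matrix m m 𝕜} (h : HasCrossMoment x x S μ) : S.IsSymm :=
  h.transpose.unique h

theorem sub_left (h : HasCrossMoment x y W μ) (h' : HasCrossMoment x' y W' μ) :
    HasCrossMoment (fun ω => x ω - x' ω) y (W - W') μ where
  integrable i j := by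
    simp only [Pi.sub_apply, sub_mul]
    exact (h.integrable i j).sub (h'.integrable i j)
  integral_eq i j := by
    simp only [Pi.sub_apply, sub_mul, Matrix.sub_apply]
    rw [integral_sub (h.integrable i j) (h'.integrable i j), h.integral_eq, h'.integral_eq]

theorem sub_right (h : HasCrossMoment x y W μ) (h' : HasCrossMoment x y' W' μ) :
    HasCrossMoment x (fun ω => y ω - y' ω) (W - W') μ :=
  (h.transpose.sub_left h'.transpose).transpose

theorem mulVec_left [Fintype m] (h : HasCrossMoment x y W μ) (M : Matrix l m 𝕜) :
    HasCrossMoment (fun ω => M *ᵥ x ω) y (M * W) μ := by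
  have entry_eq (i : l) (j : n) (ω : Ω) :
      (M *ᵥ x ω) i * y ω j = ∑ k, M i k * (x ω k * y ω j) := by
    simp only [mulVec, dotProduct, Finset.sum_mul, mul_assoc]
  have integrable_term (i : l) (j : n) (k : m) :
      Integrable (fun ω => M i k * (x ω k * y ω j)) μ :=
    (h.integrable k j).const_mul _
  constructor <;> intro i j <;> simp only [entry_eq]
  · exact integrable_finsetSum _ fun k _ => integrable_term i j k
  · rw [integral_finsetSum _ fun k _ => integrable_term i j k]
    simp only [integral_const_mul, h.integral_eq, Matrix.mul_apply]

theorem mulVec_right [Fintype n] (h : HasCrossMoment x y W μ) (N : Matrix l n 𝕜) :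
    HasCrossMoment x (fun ω => N *ᵥ y ω) (W * Nᵀ) μ := by
  simpa only [transpose_mul, transpose_transpose] using (h.transpose.mulVec_left N).transpose

theorem smul_smul_of_ae_mul_eq {s t w : Ω → 𝕜} (hst : ∀ᵐ ω ∂μ, s ω * t ω = w ω)
    (hint : ∀ i j, Integrable (fun ω => w ω * (x ω i * y ω j)) μ) :
    HasCrossMoment (fun ω => s ω • x ω) (fun ω => t ω • y ω)
      (of fun i j => ∫ ω, w ω * (x ω i * y ω j) ∂μ) μ := by
  have entry_ae_eq (i : m) (j : n) :
      (fun ω => (s ω • x ω) i * (t ω • y ω) j) =ᵐ[μ] fun ω => w ω * (x ω i * y ω j) := by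
    filter_upwards [hst] with ω hω
    rw [Pi.smul_apply, Pi.smul_apply, smul_eq_mul, smul_eq_mul, mul_mul_mul_comm, hω]
  exact ⟨fun i j => (hint i j).congr (entry_ae_eq i j).symm,
    fun i j => integral_congr_ae (entry_ae_eq i j)⟩

theorem inv_mulVec_sub_inv_mulVec [Fintype n] [DecidableEq n] {x y : Ω → n → 𝕜}
    {A B C : Matrix n n 𝕜} (hA : HasCrossMoment x x A μ) (hB : HasCrossMoment x y B μ)
    (hC : HasCrossMoment y y C μ) (hAu : IsUnit A) (hBu : IsUnit B) :
    HasCrossMoment (fun ω => A⁻¹ *ᵥ x ω - Bᵀ⁻¹ *ᵥ y ω) (fun ω => A⁻¹ *ᵥ x ω - Bᵀ⁻¹ *ᵥ y ω)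
      (Bᵀ⁻¹ * C * B⁻¹ - A⁻¹) μ := by
  rw [isUnit_iff_isUnit_det] at hAu hBu
  have hxx : HasCrossMoment (fun ω => A⁻¹ *ᵥ x ω) (fun ω => A⁻¹ *ᵥ x ω) A⁻¹ μ := by
    simpa only [nonsing_inv_mul A hAu, one_mul, transpose_nonsing_inv, hA.isSymm.eq]
      using (hA.mulVec_left A⁻¹).mulVec_right A⁻¹
  have hxy : HasCrossMoment (fun ω => A⁻¹ *ᵥ x ω) (fun ω => Bᵀ⁻¹ *ᵥ y ω) A⁻¹ μ := by
    simpa only [transpose_nonsing_inv, transpose_transpose, mul_nonsing_inv_cancel_right B _ hBu]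
      using (hB.mulVec_left A⁻¹).mulVec_right Bᵀ⁻¹
  have hyx : HasCrossMoment (fun ω => Bᵀ⁻¹ *ᵥ y ω) (fun ω => A⁻¹ *ᵥ x ω) A⁻¹ μ := by
    simpa only [transpose_nonsing_inv, hA.isSymm.eq] using hxy.transpose
  have hyy : HasCrossMoment (fun ω => Bᵀ⁻¹ *ᵥ y ω) (fun ω => Bᵀ⁻¹ *ᵥ y ω)
      (Bᵀ⁻¹ * C * B⁻¹) μ := by
    simpa only [transpose_nonsing_inv, transpose_transpose]
      using (hC.mulVec_left Bᵀ⁻¹).mulVec_right Bᵀ⁻¹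
  convert (hxx.sub_left hyx).sub_right (hxy.sub_left hyy) using 1
  abel

end HasCrossMoment

theorem exp_outer_f_eq_general {Ω ι : Type*} [MeasurableSpace Ω] [Fintype ι] [DecidableEq ι]
    (μ : Measure Ω) (v : Ω → ι → ℝ) (h : Ω → ℝ)
    (hpos : ∀ᵐ ω ∂μ, 0 < h ω)
    (hBint : ∀ i j, Integrable (fun ω => v ω i * v ω j) μ)
    (hAint : ∀ i j, Integrable (fun ω => h ω * (v ω i * v ω j)) μ)
    (hCint : ∀ i j, Integrable (fun ω => (h ω)⁻¹ * (v ω i * v ω j)) μ)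
    (A B C : Matrix ι ι ℝ)
    (hA : A = of fun i j => ∫ ω, h ω * (v ω i * v ω j) ∂μ)
    (hB : B = of fun i j => ∫ ω, v ω i * v ω j ∂μ)
    (hC : C = of fun i j => ∫ ω, (h ω)⁻¹ * (v ω i * v ω j) ∂μ)
    (hAu : IsUnit A) (hBu : IsUnit B)
    (f : Ω → ι → ℝ)
    (hf : ∀ ω, f ω = √(h ω) • A⁻¹ *ᵥ v ω - (√(h ω))⁻¹ • B⁻¹ *ᵥ v ω) :
    (∀ i j, Integrable (fun ω => f ω i * f ω j) μ) ∧
      (of fun i j => ∫ ω, f ω i * f ω j ∂μ) = B⁻¹ * C * B⁻¹ - A⁻¹ := by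
  let x ω := √(h ω) • v ω
  let y ω := (√(h ω))⁻¹ • v ω
  have hxx : HasCrossMoment x x A μ := hA ▸ .smul_smul_of_ae_mul_eq
    (hpos.mono fun ω hω => Real.mul_self_sqrt hω.le) hAint
  have hxy : HasCrossMoment x y B μ := by
    simpa only [one_mul, ← hB] using
      HasCrossMoment.smul_smul_of_ae_mul_eq (x := v) (y := v) (w := fun _ => 1)
        (hpos.mono fun ω hω => mul_inv_cancel₀ (Real.sqrt_ne_zero'.2 hω))
        (by simpa only [one_mul] using hBint)
  have hyy : HasCrossMoment y y C μ := hC ▸ .smul_smul_of_ae_mul_eq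
    (hpos.mono fun ω hω => by rw [← mul_inv, Real.mul_self_sqrt hω.le]) hCint
  have hB_symm : Bᵀ = B := (HasCrossMoment.mk hBint fun i j => by rw [hB, of_apply]).isSymm
  have f_eq : f = fun ω => A⁻¹ *ᵥ x ω - Bᵀ⁻¹ *ᵥ y ω := by
    funext ω
    rw [hf, hB_symm, mulVec_smul, mulVec_smul]
  have hff : HasCrossMoment f f (B⁻¹ * C * B⁻¹ - A⁻¹) μ := by
    simpa only [f_eq, hB_symm] using hxx.inv_mulVec_sub_inv_mulVec hxy hyy hAu hBu
  exact ⟨hff.integrable, Matrix.ext hff.integral_eq⟩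

/-- with `A := E[h v vᵀ]`, `B := E[v vᵀ]` positive definite and
`C := E[h⁻¹ v vᵀ]` existing (expectations entrywise), the random vector
`f := √h · A⁻¹ v − h^{−1/2} · B⁻¹ v` satisfies: `E[f fᵀ]` exists (entrywise
integrable) and `E[f fᵀ] = B⁻¹ C B⁻¹ − A⁻¹`. -/
theorem exp_outer_f_eq
    {Ω : Type*} [MeasurableSpace Ω] (μ : Measure Ω) [IsProbabilityMeasure μ]
    {p : ℕ} (v : Ω → Fin p → ℝ) (h : Ω → ℝ)
    (hv : Measurable v) (hh : Measurable h)
    (hpos : ∀ᵐ ω ∂μ, 0 < h ω)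
    (hBint : ∀ i j, Integrable (fun ω => v ω i * v ω j) μ)
    (hAint : ∀ i j, Integrable (fun ω => h ω * (v ω i * v ω j)) μ)
    (hCint : ∀ i j, Integrable (fun ω => (h ω)⁻¹ * (v ω i * v ω j)) μ)
    (A B C : Matrix (Fin p) (Fin p) ℝ)
    (hA : A = Matrix.of fun i j => ∫ ω, h ω * (v ω i * v ω j) ∂μ)
    (hB : B = Matrix.of fun i j => ∫ ω, v ω i * v ω j ∂μ)
    (hC : C = Matrix.of fun i j => ∫ ω, (h ω)⁻¹ * (v ω i * v ω j) ∂μ)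
    (hApd : A.PosDef) (hBpd : B.PosDef)
    (f : Ω → Fin p → ℝ)
    (hf : ∀ ω, f ω = Real.sqrt (h ω) • A⁻¹.mulVec (v ω)
        - (Real.sqrt (h ω))⁻¹ • B⁻¹.mulVec (v ω)) :
    (∀ i j, Integrable (fun ω => f ω i * f ω j) μ) ∧
      (Matrix.of fun i j => ∫ ω, f ω i * f ω j ∂μ) = B⁻¹ * C * B⁻¹ - A⁻¹ :=
  exp_outer_f_eq_general μ v h hpos hBint hAint hCint A B C hA hB hC hApd.isUnit hBpd.isUnit f hf
end
end
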